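/- arXiv:math/0612331 — 2 statements merged into one kernel-verified Lean document; each statement's English description precedes it below -/
import Mathlib

section
/- Let H be an induced subgraph of a graph G with mr(F₂,H) = k, and suppose G ∈ F_{k+1}(F₂,H). Let C(F₂,H) be the set of equivalence classes of MR(F₂,H) under the relation of having equal column spaces. If |V(G)| − |V(H)| ≥ |C(F₂,H)| + 1, then there exists M ∈ MR(F₂,H) such that every vertex of G−H is rank-preserving with respect to M. -/
/-!
Suppose that every `M ∈ MR(F₂, H)` has a vertex of `G - H` that is rank-increasing with respect
to it. The weight of such a vertex lies outside the column space of `M`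
(`rank_augmentCol_of_mem_range`), so one bad vertex can be chosen for each column space. By the
cardinality hypothesis some vertex `v` of `G - H` is not among the chosen ones. Let `A` be a
matrix of minimum rank (at most `k`) for `G - v`. Its block `M` on `H` has rank at least
`mr(F₂, H) = k`, so `M ∈ MR(F₂, H)` and the rows of `A` indexed by `H` have the same column space
as `M` (`col_mem_range_of_rank_le`). Over `F₂` the columns of these rows at vertices outside `H`
are exactly the weights, so every vertex of `G - H` other than `v` is rank-preserving with respect
to `M`; this contradicts the choice of a bad vertex different from `v` for the column space of `M`.
-/

open Matrix

/-- `A` is a symmetric matrix over `F` whose off-diagonal nonzero pattern is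
given by the graph `G` (diagonal entries are unconstrained). -/
def IsGraphMatrix (F : Type*) [Field F] {V : Type*} (G : SimpleGraph V)
    (A : Matrix V V F) : Prop :=
  A.IsSymm ∧ ∀ i j : V, i ≠ j → (A i j ≠ 0 ↔ G.Adj i j)

/-- The minimum rank `mr(F, G)` of the graph `G` over the field `F`. -/
noncomputable def minRank (F : Type*) [Field F] {V : Type*} [Fintype V]
    (G : SimpleGraph V) : ℕ :=
  sInf {r : ℕ | ∃ A : Matrix V V F, IsGraphMatrix F G A ∧ A.rank = r}

/-- The graph `G - v` obtained from `G` by deleting the vertex `v`. -/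
def deleteVert {V : Type*} (G : SimpleGraph V) (v : V) : SimpleGraph {u : V // u ≠ v} :=
  SimpleGraph.comap Subtype.val G

/-- The induced subgraph of `G` on a finite set `W` of vertices. -/
def inducedSub {V : Type*} (G : SimpleGraph V) (W : Finset V) :
    SimpleGraph {x : V // x ∈ W} :=
  SimpleGraph.comap Subtype.val G

/-- `MR(F, G)`: the set of matrices in `S(F, G)` attaining the minimum rank of `G`. -/
noncomputable def MRSet (F : Type*) [Field F] {V : Type*} [Fintype V] (G : SimpleGraph V) :
    Set (Matrix V V F) :=
  {A | IsGraphMatrix F G A ∧ A.rank = minRank F G}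

/-- The weight vector of a vertex `v` with respect to the induced subgraph on `W`:
its entry at `i ∈ W` is `1` iff `v` is adjacent to `i` in `G`. -/
def wtVec {V : Type*} (G : SimpleGraph V) [DecidableRel G.Adj] (W : Finset V) (v : V) :
    {x : V // x ∈ W} → ZMod 2 :=
  fun i => if G.Adj v ↑i then 1 else 0

/-- The matrix `[M | w]`: `M` augmented by the extra column `w`. -/
def augmentCol {F : Type*} {n : Type*} (M : Matrix n n F) (w : n → F) :
    Matrix n (n ⊕ Unit) F :=
  Matrix.of fun i => Sum.elim (fun j => M i j) (fun _ => w i)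

/-- The bordered matrix `[[M, u], [vᵀ, c]]`. -/
def borderMat {F : Type*} {n : Type*} (M : Matrix n n F) (u v : n → F) (c : F) :
    Matrix (n ⊕ Unit) (n ⊕ Unit) F :=
  Matrix.of (Sum.elim (fun i => Sum.elim (fun j => M i j) (fun _ => u i))
                      (fun _ => Sum.elim (fun j => v j) (fun _ => c)))

theorem exists_isGraphMatrix_rank_eq_minRank (F : Type*) [Field F] {V : Type*} [Fintype V]
    (G : SimpleGraph V) : ∃ A : Matrix V V F, IsGraphMatrix F G A ∧ A.rank = minRank F G := by
  classical
  have hne : {r : ℕ | ∃ A : Matrix V V F, IsGraphMatrix F G A ∧ A.rank = r}.Nonempty := by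
    refine ⟨_, G.adjMatrix F, ⟨G.isSymm_adjMatrix, fun i j _ => ?_⟩, rfl⟩
    by_cases h : G.Adj i j <;> simp [SimpleGraph.adjMatrix_apply, h]
  exact Nat.sInf_mem hne

theorem minRank_le_rank {F : Type*} [Field F] {V : Type*} [Fintype V] {G : SimpleGraph V}
    {A : Matrix V V F} (hA : IsGraphMatrix F G A) : minRank F G ≤ A.rank :=
  Nat.sInf_le ⟨A, hA, rfl⟩

theorem rank_augmentCol_of_mem_range {F n : Type*} [Field F] [Fintype n] (M : Matrix n n F)
    (w : n → F) (hw : w ∈ LinearMap.range M.mulVecLin) : (augmentCol M w).rank = M.rank := by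
  have h : LinearMap.range (augmentCol M w).mulVecLin = LinearMap.range M.mulVecLin := by
    apply le_antisymm
    · rw [Matrix.range_mulVecLin, Submodule.span_le]
      rintro _ ⟨j | j, rfl⟩
      · rw [Matrix.range_mulVecLin]
        exact Submodule.subset_span ⟨j, rfl⟩
      · exact hw
    · rw [Matrix.range_mulVecLin, Matrix.range_mulVecLin]
      apply Submodule.span_mono
      rintro _ ⟨j, rfl⟩
      exact ⟨Sum.inl j, rfl⟩
  rw [Matrix.rank, Matrix.rank, h]

/-- If a block of rows and columns already has the full rank of the matrix, then every column of
the matrix, restricted to the rows of the block, lies in the column space of the block. -/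
theorem col_mem_range_of_rank_le {F m n : Type*} [Field F] [Fintype m] [Fintype n]
    (A : Matrix n n F) (e : m → n) (h : A.rank ≤ (A.submatrix e e).rank) (u : n) :
    (fun i => A (e i) u) ∈ LinearMap.range (A.submatrix e e).mulVecLin := by
  have hle : LinearMap.range (A.submatrix e e).mulVecLin ≤
      LinearMap.range (A.submatrix e id).mulVecLin := by
    rw [Matrix.range_mulVecLin, Matrix.range_mulVecLin]
    apply Submodule.span_mono
    rintro _ ⟨j, rfl⟩
    exact ⟨e j, rfl⟩
  have hr : (A.submatrix e id).rank ≤ A.rank := A.rank_submatrix_le e id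
  rw [Submodule.eq_of_le_of_finrank_le hle (hr.trans h), Matrix.range_mulVecLin]
  exact Submodule.subset_span ⟨u, rfl⟩

/-- Let `H = G[W]` be an induced subgraph of `G` with `mr(F₂, H) = k`, and suppose
`G ∈ F_{k+1}(F₂, H)` (witnessed by this copy of `H`).  If `|V(G)| - |V(H)|` is at least
one more than the number of equivalence classes of `MR(F₂, H)` under equality of column
spaces, then there is an `M ∈ MR(F₂, H)` with respect to which every vertex of `G - H`
is rank-preserving. -/
theorem exists_M_all_vertices_rank_preserving {V : Type*} [Fintype V] [DecidableEq V]
    (G : SimpleGraph V) [DecidableRel G.Adj] (W : Finset V) (k : ℕ)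
    (hH : minRank (ZMod 2) (inducedSub G W) = k)
    (hG : k + 1 ≤ minRank (ZMod 2) G)
    (hdel : ∀ v : V, v ∉ W → minRank (ZMod 2) (deleteVert G v) ≤ k)
    (hcard : ((fun M : Matrix {x : V // x ∈ W} {x : V // x ∈ W} (ZMod 2) =>
        LinearMap.range M.mulVecLin) '' MRSet (ZMod 2) (inducedSub G W)).ncard + 1 ≤
        Wᶜ.card) :
    ∃ M ∈ MRSet (ZMod 2) (inducedSub G W),
      ∀ v : V, v ∉ W → (augmentCol M (wtVec G W v)).rank = M.rank := by
  classical
  by_contra! hcon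
  have hbad : ∀ S ∈ (fun M : Matrix {x : V // x ∈ W} {x : V // x ∈ W} (ZMod 2) =>
      LinearMap.range M.mulVecLin) '' MRSet (ZMod 2) (inducedSub G W),
      ∃ v : V, v ∉ W ∧ wtVec G W v ∉ S := by
    rintro _ ⟨M, hM, rfl⟩
    obtain ⟨v, hv, hne⟩ := hcon M hM
    exact ⟨v, hv, fun hmem => hne (rank_augmentCol_of_mem_range M _ hmem)⟩
  have hpos : Wᶜ.Nonempty := Finset.card_pos.1 (by omega)
  -- `choose!` needs an inhabitant of `V` to define `f` on subspaces that are not column spaces.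
  have : Nonempty V := ⟨hpos.choose⟩
  choose! f hfW hf using hbad
  set C := (fun M : Matrix {x : V // x ∈ W} {x : V // x ∈ W} (ZMod 2) =>
      LinearMap.range M.mulVecLin) '' MRSet (ZMod 2) (inducedSub G W) with hC
  -- There are more vertices outside `W` than chosen bad vertices.
  obtain ⟨v, hvW, hvf⟩ : ∃ v ∈ (↑(Wᶜ) : Set V), v ∉ f '' C := by
    apply Set.exists_mem_notMem_of_ncard_lt_ncard
    · rw [Set.ncard_coe_finset]
      have := Set.ncard_image_le (f := f) (Set.toFinite C)
      omega
    · exact Set.toFinite _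
  have hv : v ∉ W := by simpa using hvW
  obtain ⟨A, hA, hAr⟩ := exists_isGraphMatrix_rank_eq_minRank (ZMod 2) (deleteVert G v)
  let e : {x : V // x ∈ W} → {u : V // u ≠ v} := fun i => ⟨i, fun h => hv (h ▸ i.2)⟩
  have hMg : IsGraphMatrix (ZMod 2) (inducedSub G W) (A.submatrix e e) := by
    refine ⟨hA.1.submatrix e, fun i j hij => hA.2 (e i) (e j) fun h => hij ?_⟩
    exact Subtype.ext (congrArg (fun x => x.1) h)
  have hAk : A.rank ≤ k := hAr.trans_le (hdel v hv)
  have hkM : k ≤ (A.submatrix e e).rank := hH ▸ minRank_le_rank hMg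
  have hMA : (A.submatrix e e).rank ≤ A.rank := A.rank_submatrix_le e e
  have hMC : LinearMap.range (A.submatrix e e).mulVecLin ∈ C :=
    ⟨_, ⟨hMg, by omega⟩, rfl⟩
  have hne : f (LinearMap.range (A.submatrix e e).mulVecLin) ≠ v :=
    fun h => hvf ⟨_, hMC, h⟩
  apply hf _ hMC
  convert col_mem_range_of_rank_le A e (hAk.trans hkM) ⟨_, hne⟩ using 1
  funext i
  have hiu : e i ≠ ⟨_, hne⟩ := by
    intro h
    have hval : i.1 = f (LinearMap.range (A.submatrix e e).mulVecLin) :=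
      congrArg Subtype.val h
    exact hfW _ hMC (hval ▸ i.2)
  have hadj : A (e i) ⟨_, hne⟩ ≠ 0 ↔
      G.Adj i (f (LinearMap.range (A.submatrix e e).mulVecLin)) := hA.2 _ _ hiu
  -- The only nonzero element of `F₂` is `1`, so the adjacency pattern determines the entry.
  have h01 : ∀ x : ZMod 2, x ≠ 0 → x = 1 := by decide
  by_cases h : G.Adj i (f (LinearMap.range (A.submatrix e e).mulVecLin))
  · simp only [wtVec, h.symm, if_true]
    exact (h01 _ (hadj.2 h)).symm
  · simp only [wtVec, G.adj_comm _ i.1, h, if_false]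
    by_contra h0
    exact h (hadj.1 (Ne.symm h0))
end

section
/- If G ∈ F₄(F₂, full house), then |V(G)| ≤ 8. Here the full house is the graph on vertex set {1,2,3,4,5} with edge set {12, 13, 23, 24, 25, 34, 35, 45}. -/
/-!
The argument works with symmetric matrices of rank at most three over `ZMod 2` and their restriction
to a fixed induced full house `H`.

A matrix of rank at most three that fits the full house has one of the four diagonals `D₁, …, D₄`
(`fhDiag 0, …, fhDiag 3`), and in each case its principal minor on the vertices `0, 1, 3` is `1`.
Hence a matrix of rank at most three that fits a graph containing `H` is determined by its diagonal `D` on `H` and by the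
adjacencies to `H`: the entry at `(u, w)` is `qf D` evaluated on the rows of `u` and `w`
(`exists_diag_of_rank_le`), and conversely if this formula reproduces all adjacencies, then the
graph has minimum rank at most three (`minRank_le_of_good`). So `mr(G) ≥ 4` says that for each of
the four diagonals some pair of vertices violates the formula.

It remains to find at most three vertices that, together with `H`, contain a violation
for each diagonal (`exists_small_blocker`); a further vertex outside `H` could then be deleted
without lowering the minimum rank. Let `C D` be the space of rows compatible with `D`. A vertex
whose row is outside `C D₂ = C D₄` violates `D₂`, `D₄` and one of `D₁, D₃`, and two more
vertices violate the remaining diagonal. If all rows lie in `C D₂`, then a violation of `D₂`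
violates `D₁` too and a violation of `D₄` violates `D₃` too, because the forms agree on
`C D₁ ∩ C D₂` and on `C D₃ ∩ C D₄`. Finally `qf D₂ - qf D₄` is the product `ℓ(r) ℓ(s)` of linear
forms, so if `{v, w}` violates only `D₂` and `{x, y}` only `D₄`, then `ℓ = 1` on all four rows,
`{v, x}` violates one of the two, and three of the vertices suffice.
-/

open Matrix

/-- `G ∈ F_K(F, H)`: `G` contains `H` as an induced subgraph, `mr(F, G) ≥ K`, and for
some induced copy of `H` in `G` (an embedding `f : H ↪g G`), `mr(F, G - v) ≤ K - 1`
for every vertex `v` of `G` outside that copy. -/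
def MemForbRel (F : Type*) [Field F] (K : ℕ) {VH VG : Type*} [Fintype VH] [Fintype VG]
    [DecidableEq VG] (H : SimpleGraph VH) (G : SimpleGraph VG) : Prop :=
  K ≤ minRank F G ∧
    ∃ f : H ↪g G, ∀ v : VG, v ∉ Set.range f → minRank F (deleteVert G v) + 1 ≤ K

/-- The full house graph: vertices `{0, 1, 2, 3, 4}` with edges
`01, 02, 12, 13, 14, 23, 24, 34` (the graph `12, 13, 23, 24, 25, 34, 35, 45`
on `{1, …, 5}` in 1-indexed notation). -/
def fullHouse : SimpleGraph (Fin 5) :=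
  SimpleGraph.fromEdgeSet {s(0,1), s(0,2), s(1,2), s(1,3), s(1,4), s(2,3), s(2,4), s(3,4)}

/-! ### Matrices of the full house -/

/-- The symmetric matrix of the full house over `ZMod 2` with diagonal `D`. -/
def fhM (D : Fin 5 → ZMod 2) : Fin 5 → Fin 5 → ZMod 2 :=
  ![![D 0, 1, 1, 0, 0],
    ![1, D 1, 1, 1, 1],
    ![1, 1, D 2, 1, 1],
    ![0, 1, 1, D 3, 1],
    ![0, 1, 1, 1, D 4]]

/-- The bilinear form given by the adjugate of the principal submatrix `[D₀ 1 0; 1 D₁ 1; 0 1 D₃]`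
of `fhM D` on the vertices `0, 1, 3`; when that submatrix has determinant `1`, this is the form of
its inverse. -/
def qf (D r s : Fin 5 → ZMod 2) : ZMod 2 :=
  (D 1 * D 3 - 1) * (r 0 * s 0) - D 3 * (r 0 * s 1 + r 1 * s 0) + (r 0 * s 3 + r 3 * s 0)
    + D 0 * D 3 * (r 1 * s 1) - D 0 * (r 1 * s 3 + r 3 * s 1) + (D 0 * D 1 - 1) * (r 3 * s 3)

lemma qf_comm (D r s : Fin 5 → ZMod 2) : qf D r s = qf D s r := by
  unfold qf; ring

/-- The four diagonals for which the matrix of the full house has rank three. -/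
def fhDiag : Fin 4 → Fin 5 → ZMod 2 :=
  ![![0, 0, 0, 1, 1], ![0, 1, 1, 1, 1], ![1, 1, 1, 0, 0], ![1, 1, 1, 1, 1]]

/-- The row `r` is compatible with the diagonal `D`; that is, `r` lies in the row space of
`fhM D` when `D` is one of the four diagonals `fhDiag k`. -/
def InC (D r : Fin 5 → ZMod 2) : Prop := ∀ i, qf D r (fhM D i) = r i

instance (D r : Fin 5 → ZMod 2) : Decidable (InC D r) := by unfold InC; infer_instance

lemma inC_zero_iff : ∀ r, InC (fhDiag 0) r ↔ r 3 = r 4 ∧ r 0 = r 1 + r 2 := by decide +kernel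

lemma inC_one_iff : ∀ r, InC (fhDiag 1) r ↔ r 1 = r 2 ∧ r 3 = r 4 := by decide +kernel

lemma inC_two_iff : ∀ r, InC (fhDiag 2) r ↔ r 1 = r 2 ∧ r 0 = r 1 + r 3 + r 4 := by decide +kernel

lemma inC_three_iff : ∀ r, InC (fhDiag 3) r ↔ r 1 = r 2 ∧ r 3 = r 4 := by decide +kernel

lemma not_inC_zero_or_two : ∀ r, ¬ InC (fhDiag 1) r → ¬ InC (fhDiag 0) r ∨ ¬ InC (fhDiag 2) r := by
  decide +kernel

lemma qf_zero_eq_one (r s : Fin 5 → ZMod 2) (hr : InC (fhDiag 0) r) (hr' : InC (fhDiag 1) r)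
    (hs : InC (fhDiag 0) s) (hs' : InC (fhDiag 1) s) :
    qf (fhDiag 0) r s = qf (fhDiag 1) r s := by
  have hr0 : r 0 = 0 := by
    rw [((inC_zero_iff r).1 hr).2, ((inC_one_iff r).1 hr').1, CharTwo.add_self_eq_zero]
  have hs0 : s 0 = 0 := by
    rw [((inC_zero_iff s).1 hs).2, ((inC_one_iff s).1 hs').1, CharTwo.add_self_eq_zero]
  simp only [qf, fhDiag, hr0, hs0]
  generalize r 1 = a, r 3 = b, s 1 = c, s 3 = d
  revert a b c d
  decide +kernel

lemma qf_two_eq_three (r s : Fin 5 → ZMod 2) (hr : InC (fhDiag 2) r) (hr' : InC (fhDiag 3) r)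
    (hs : InC (fhDiag 2) s) (hs' : InC (fhDiag 3) s) :
    qf (fhDiag 2) r s = qf (fhDiag 3) r s := by
  have hr0 : r 0 = r 1 := by
    rw [((inC_two_iff r).1 hr).2, ((inC_three_iff r).1 hr').2, add_assoc,
      CharTwo.add_self_eq_zero, add_zero]
  have hs0 : s 0 = s 1 := by
    rw [((inC_two_iff s).1 hs).2, ((inC_three_iff s).1 hs').2, add_assoc,
      CharTwo.add_self_eq_zero, add_zero]
  simp only [qf, fhDiag, hr0, hs0]
  generalize r 1 = a, r 3 = b, s 1 = c, s 3 = d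
  revert a b c d
  decide +kernel

lemma qf_one_sub_three (r s : Fin 5 → ZMod 2) :
    qf (fhDiag 1) r s - qf (fhDiag 3) r s = (r 1 + r 3) * (s 1 + s 3) := by
  simp only [qf, fhDiag]
  generalize r 0 = a, r 1 = b, r 3 = c, s 0 = a', s 1 = b', s 3 = c'
  revert a b c a' b' c'
  decide +kernel

lemma fhM_diag : ∀ D i, fhM D i i = D i := by decide +kernel

lemma fhM_off : ∀ D i j, i ≠ j → fhM D i j = fhM 0 i j := by decide +kernel

lemma inC_fhM : ∀ k i, InC (fhDiag k) (fhM (fhDiag k) i) := by decide +kernel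

lemma det_fin_four {R : Type*} [CommRing R] (M : Matrix (Fin 4) (Fin 4) R) : M.det =
    M 0 0 * (M 1 1 * (M 2 2 * M 3 3 - M 2 3 * M 3 2) - M 1 2 * (M 2 1 * M 3 3 - M 2 3 * M 3 1)
      + M 1 3 * (M 2 1 * M 3 2 - M 2 2 * M 3 1))
    - M 0 1 * (M 1 0 * (M 2 2 * M 3 3 - M 2 3 * M 3 2) - M 1 2 * (M 2 0 * M 3 3 - M 2 3 * M 3 0)
      + M 1 3 * (M 2 0 * M 3 2 - M 2 2 * M 3 0))
    + M 0 2 * (M 1 0 * (M 2 1 * M 3 3 - M 2 3 * M 3 1) - M 1 1 * (M 2 0 * M 3 3 - M 2 3 * M 3 0)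
      + M 1 3 * (M 2 0 * M 3 1 - M 2 1 * M 3 0))
    - M 0 3 * (M 1 0 * (M 2 1 * M 3 2 - M 2 2 * M 3 1) - M 1 1 * (M 2 0 * M 3 2 - M 2 2 * M 3 0)
      + M 1 2 * (M 2 0 * M 3 1 - M 2 1 * M 3 0)) := by
  rw [Matrix.det_succ_row_zero]
  simp [Fin.sum_univ_succ, Matrix.det_fin_three, Fin.succAbove]
  ring

/-- A symmetric matrix of the full house all of whose `4 × 4` minors vanish has one of the four
diagonals `fhDiag k`. -/
lemma diag_of_minors (D : Fin 5 → ZMod 2)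
    (h : ∀ r c : Fin 4 → Fin 5, ((Matrix.of (fhM D)).submatrix r c).det = 0) :
    ∃ k, D = fhDiag k := by
  -- These two minors already exclude the other 28 diagonals.
  have h1 := h ![0, 1, 2, 3] ![0, 1, 2, 4]
  have h2 := h ![0, 1, 3, 4] ![0, 1, 3, 4]
  clear h
  simp only [det_fin_four, Matrix.submatrix_apply, Matrix.of_apply] at h1 h2
  revert D
  decide +kernel

/-! ### Matrices of rank at most three and violated pairs -/

/-- The `0`/`1` indicator of adjacency in `G`, valued in `ZMod 2`. -/
noncomputable def adjv {V : Type*} (G : SimpleGraph V) (u w : V) : ZMod 2 :=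
  open Classical in if G.Adj u w then 1 else 0

/-- The row of the vertex `u` on the copy `f` of the full house, for a matrix of `G` whose diagonal
on that copy is `D`. -/
noncomputable def vrow {V : Type*} (G : SimpleGraph V) (f : Fin 5 → V) (D : Fin 5 → ZMod 2)
    (u : V) : Fin 5 → ZMod 2 :=
  fun j => open Classical in if u = f j then D j else adjv G u (f j)

/-- The pair `u, w` violates the diagonal `D`: the entry forced by a matrix of rank three with
diagonal `D` on the full house does not match the adjacency of `u` and `w`. -/
def Bad {V : Type*} (G : SimpleGraph V) (f : Fin 5 → V) (D : Fin 5 → ZMod 2) (u w : V) : Prop :=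
  u ≠ w ∧ qf D (vrow G f D u) (vrow G f D w) ≠ adjv G u w

section

variable {V : Type*} {G : SimpleGraph V}

lemma adjv_comm (u w : V) : adjv G u w = adjv G w u := by
  unfold adjv
  congr 1
  exact propext (G.adj_comm u w)

lemma adjv_ne_zero_iff (u w : V) : adjv G u w ≠ 0 ↔ G.Adj u w := by
  simp [adjv]

lemma zmod_two_eq : ∀ a b : ZMod 2, (a ≠ 0 ↔ b ≠ 0) → a = b := by decide +kernel

lemma IsGraphMatrix.eq_adjv {A : Matrix V V (ZMod 2)} (hA : IsGraphMatrix (ZMod 2) G A) {u w : V}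
    (h : u ≠ w) : A u w = adjv G u w :=
  zmod_two_eq _ _ ((hA.2 u w h).trans (adjv_ne_zero_iff u w).symm)

lemma adjv_fullHouse (f : fullHouse ↪g G) (i j : Fin 5) : adjv G (f i) (f j) = fhM 0 i j := by
  classical
  simp only [adjv, f.map_adj_iff]
  revert i j
  simp [fullHouse, fhM, Fin.forall_fin_succ]

lemma row_copy (f : fullHouse ↪g G) (D : Fin 5 → ZMod 2) (i : Fin 5) :
    vrow G f D (f i) = fhM D i := by
  ext j
  by_cases h : i = j
  · subst h
    simp only [vrow, if_true, fhM_diag]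
  · have h' : f i ≠ f j := fun e => h (f.injective e)
    simp only [vrow, h', if_false, adjv_fullHouse, fhM_off D i j h]

/-- The row of a vertex outside the full house; it does not depend on the diagonal. -/
noncomputable def orow (G : SimpleGraph V) (f : Fin 5 → V) (u : V) : Fin 5 → ZMod 2 :=
  fun j => adjv G u (f j)

lemma row_outside (f : fullHouse ↪g G) (D : Fin 5 → ZMod 2) {u : V} (hu : u ∉ Set.range f) :
    vrow G f D u = orow G f u := by
  ext j
  have : u ≠ f j := fun e => hu ⟨j, e.symm⟩
  simp [vrow, orow, this]

lemma minor_eq_zero {W : Type*} [Fintype W] {A : Matrix W W (ZMod 2)} (hA : A.rank ≤ 3)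
    (r c : Fin 4 → W) : (A.submatrix r c).det = 0 := by
  by_contra h
  have h1 : (A.submatrix r c).rank = 4 := by
    simpa using Matrix.rank_of_isUnit _
      ((Matrix.isUnit_iff_isUnit_det _).2 (isUnit_iff_ne_zero.2 h))
  have h2 : (A.submatrix r c).rank ≤ A.rank := Matrix.rank_submatrix_le A r c
  omega

/-- A matrix of rank at most three that fits `G` has one of the four diagonals on the full house,
and all its entries are given by the form of that diagonal. -/
lemma exists_diag_of_rank_le [Fintype V] {A : Matrix V V (ZMod 2)}
    (hG : IsGraphMatrix (ZMod 2) G A) (hA : A.rank ≤ 3) (f : fullHouse ↪g G) :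
    ∃ k, ∀ u w, ¬ Bad G f (fhDiag k) u w := by
  set D : Fin 5 → ZMod 2 := fun i => A (f i) (f i) with hD
  have hrow : ∀ u j, A u (f j) = vrow G f D u j := by
    intro u j
    by_cases h : u = f j
    · simp [vrow, h, hD]
    · simp [vrow, h, hG.eq_adjv h]
  have hsub : A.submatrix f f = Matrix.of (fhM D) := by
    ext i j
    rw [Matrix.submatrix_apply, Matrix.of_apply, ← row_copy f D i, ← hrow]
  obtain ⟨k, hk⟩ := diag_of_minors D fun r c => by
    rw [← hsub, Matrix.submatrix_submatrix]
    exact minor_eq_zero hA _ _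
  refine ⟨k, fun u w hb => hb.2 ?_⟩
  rw [← hk, ← hG.eq_adjv hb.1]
  -- Bordering the principal submatrix on `0, 1, 3`, of determinant `1`, by `u` and `w`
  -- gives a vanishing minor, which determines the entry at `(u, w)`.
  have hm := minor_eq_zero hA ![f 0, f 1, f 3, u] ![f 0, f 1, f 3, w]
  have hdet : D 0 * D 1 * D 3 - D 0 - D 3 = 1 := by
    have : ∀ k, fhDiag k 0 * fhDiag k 1 * fhDiag k 3 - fhDiag k 0 - fhDiag k 3 = 1 := by
      decide +kernel
    rw [hk, this]
  have hw : ∀ j, A (f j) w = vrow G f D w j := fun j => by rw [← hrow, hG.1.apply]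
  have hf : ∀ i j, A (f i) (f j) = fhM D i j := fun i j => congrFun (congrFun hsub i) j
  rw [det_fin_four] at hm
  simp [hf, hrow, hw] at hm
  simp [fhM] at hm
  unfold qf
  -- `simp` drops signs in characteristic two; the last summand accounts for them.
  have two : (2 : ZMod 2) = 0 := rfl
  linear_combination (-1) * hm + (A u w) * hdet + (D 1 * D 3 * vrow G f D u 0 * vrow G f D w 0
    - D 3 * vrow G f D u 0 * vrow G f D w 1 - vrow G f D u 0 * vrow G f D w 0
    + vrow G f D u 0 * vrow G f D w 3) * two

/-- If no pair of vertices violates `D`, the form `qf D` on the rows is a matrix of `G` that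
factors through dimension three. -/
lemma minRank_le_of_good [Fintype V] (f : Fin 5 → V) (D : Fin 5 → ZMod 2)
    (h : ∀ u w, ¬ Bad G f D u w) : minRank (ZMod 2) G ≤ 3 := by
  let A : Matrix V V (ZMod 2) := Matrix.of fun u w => qf D (vrow G f D u) (vrow G f D w)
  have hA : IsGraphMatrix (ZMod 2) G A := by
    refine ⟨Matrix.IsSymm.ext fun i j => qf_comm _ _ _, fun i j hij => ?_⟩
    have : A i j = adjv G i j := by
      by_contra hc
      exact h i j ⟨hij, hc⟩
    rw [this, adjv_ne_zero_iff]
  let P : Matrix V (Fin 3) (ZMod 2) := Matrix.of fun u =>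
    ![vrow G f D u 0, vrow G f D u 1, vrow G f D u 3]
  let Q : Matrix (Fin 3) V (ZMod 2) := Matrix.of
    ![fun w => (D 1 * D 3 - 1) * vrow G f D w 0 - D 3 * vrow G f D w 1 + vrow G f D w 3,
      fun w => - D 3 * vrow G f D w 0 + D 0 * D 3 * vrow G f D w 1 - D 0 * vrow G f D w 3,
      fun w => vrow G f D w 0 - D 0 * vrow G f D w 1 + (D 0 * D 1 - 1) * vrow G f D w 3]
  have hfac : A = P * Q := by
    ext u w
    rw [Matrix.mul_apply, Fin.sum_univ_three]
    simp only [A, P, Q, Matrix.of_apply, qf, Matrix.cons_val]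
    ring
  have hle : minRank (ZMod 2) G ≤ A.rank := Nat.sInf_le ⟨A, hA, rfl⟩
  refine hle.trans ?_
  rw [hfac]
  refine (Matrix.rank_mul_le_left _ _).trans ?_
  simpa using P.rank_le_card_width

lemma exists_rank_eq_minRank {W : Type*} [Fintype W] (G : SimpleGraph W) :
    ∃ A : Matrix W W (ZMod 2), IsGraphMatrix (ZMod 2) G A ∧ A.rank = minRank (ZMod 2) G := by
  classical
  refine Nat.sInf_mem (s := {r : ℕ | ∃ A : Matrix W W (ZMod 2), IsGraphMatrix (ZMod 2) G A ∧
    A.rank = r}) ⟨_, G.adjMatrix (ZMod 2), ⟨G.isSymm_adjMatrix, fun i j _ => ?_⟩, rfl⟩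
  simp

lemma exists_diag_of_deleteVert [Fintype V] [DecidableEq V] (f : fullHouse ↪g G) {v : V}
    (hv : v ∉ Set.range f) (h : minRank (ZMod 2) (deleteVert G v) ≤ 3) :
    ∃ k, ∀ u w, u ≠ v → w ≠ v → ¬ Bad G f (fhDiag k) u w := by
  have hne : ∀ i, f i ≠ v := fun i e => hv ⟨i, e⟩
  let g : fullHouse ↪g deleteVert G v :=
    ⟨⟨fun i => ⟨f i, hne i⟩, fun i j e => f.injective (congrArg Subtype.val e)⟩,
      fun {i j} => f.map_adj_iff⟩
  obtain ⟨A, hA, hr⟩ := exists_rank_eq_minRank (deleteVert G v)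
  obtain ⟨k, hk⟩ := exists_diag_of_rank_le hA (hr.trans_le h) g
  refine ⟨k, fun u w hu hw hb => hk ⟨u, hu⟩ ⟨w, hw⟩ ⟨fun e => hb.1 (congrArg Subtype.val e), ?_⟩⟩
  have hrow : ∀ (x : V) (hx : x ≠ v),
      vrow (deleteVert G v) g (fhDiag k) ⟨x, hx⟩ = vrow G f (fhDiag k) x := by
    intro x hx
    ext j
    have hiff : ((⟨x, hx⟩ : {u : V // u ≠ v}) = g j) ↔ x = f j := Subtype.ext_iff
    by_cases hxj : x = f j
    · simp only [vrow, if_pos hxj, if_pos (hiff.2 hxj)]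
    · simp only [vrow, if_neg hxj, if_neg (mt hiff.1 hxj)]
      rfl
  rw [hrow, hrow]
  exact hb.2

/-! ### A small violating set -/

/-- The vertices of `T` together with the copy `f` contain a pair that violates the `k`-th
diagonal. -/
def Blocks (G : SimpleGraph V) (f : Fin 5 → V) (k : Fin 4) (T : Finset V) : Prop :=
  ∃ u w, (u ∈ Set.range f ∨ u ∈ T) ∧ (w ∈ Set.range f ∨ w ∈ T) ∧ Bad G f (fhDiag k) u w

lemma Bad.symm {f : Fin 5 → V} {D : Fin 5 → ZMod 2} {u w : V} (h : Bad G f D u w) :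
    Bad G f D w u :=
  ⟨h.1.symm, by rw [qf_comm, adjv_comm]; exact h.2⟩

lemma bad_copy_iff (f : fullHouse ↪g G) (k : Fin 4) {u : V} (hu : u ∉ Set.range f) (i : Fin 5) :
    Bad G f (fhDiag k) u (f i) ↔ qf (fhDiag k) (orow G f u) (fhM (fhDiag k) i) ≠ orow G f u i := by
  have : u ≠ f i := fun e => hu ⟨i, e.symm⟩
  simp only [Bad, row_copy, row_outside f _ hu, ne_eq, this, not_false_iff, true_and]
  rfl

lemma blocks_of_not_inC (f : fullHouse ↪g G) (k : Fin 4) {u : V} (hu : u ∉ Set.range f)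
    (h : ¬ InC (fhDiag k) (orow G f u)) {T : Finset V} (hT : u ∈ T) : Blocks G f k T := by
  simp only [InC, not_forall] at h
  obtain ⟨i, hi⟩ := h
  exact ⟨u, f i, Or.inr hT, Or.inl ⟨i, rfl⟩, (bad_copy_iff f k hu i).2 hi⟩

lemma not_bad_copy (f : fullHouse ↪g G) (k : Fin 4) (i j : Fin 5) :
    ¬ Bad G f (fhDiag k) (f i) (f j) := by
  rintro ⟨hne, h⟩
  have hij : i ≠ j := fun e => hne (congrArg f e)
  rw [row_copy, row_copy, inC_fhM, adjv_fullHouse] at h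
  exact h (fhM_off _ i j hij)

/-- When all outside rows are compatible with the `k`-th diagonal, a pair violating it lies outside
the full house. -/
lemma Bad.outside (f : fullHouse ↪g G) {k : Fin 4}
    (hC : ∀ u, u ∉ Set.range f → InC (fhDiag k) (orow G f u)) {u w : V}
    (h : Bad G f (fhDiag k) u w) : u ∉ Set.range f ∧ w ∉ Set.range f := by
  by_cases hu : u ∈ Set.range f <;> by_cases hw : w ∈ Set.range f
  · obtain ⟨i, rfl⟩ := hu
    obtain ⟨j, rfl⟩ := hw
    exact absurd h (not_bad_copy f k i j)
  · obtain ⟨i, rfl⟩ := hu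
    exact absurd (hC w hw i) ((bad_copy_iff f k hw i).1 h.symm)
  · obtain ⟨i, rfl⟩ := hw
    exact absurd (hC u hu i) ((bad_copy_iff f k hu i).1 h)
  · exact ⟨hu, hw⟩

/-- When all outside rows are compatible with the `k`-th diagonal, a violation of it in `T` gives one
of the `l`-th diagonal if the two forms agree on the rows compatible with both diagonals. -/
lemma Bad.transfer (f : fullHouse ↪g G) {k l : Fin 4}
    (hkl : ∀ r s, InC (fhDiag l) r → InC (fhDiag k) r → InC (fhDiag l) s → InC (fhDiag k) s →
      qf (fhDiag l) r s = qf (fhDiag k) r s)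
    (hC : ∀ u, u ∉ Set.range f → InC (fhDiag k) (orow G f u)) {u w : V}
    (h : Bad G f (fhDiag k) u w) {T : Finset V} (hu : u ∈ T) (hw : w ∈ T) : Blocks G f l T := by
  obtain ⟨ou, ow⟩ := h.outside f hC
  by_cases h1 : InC (fhDiag l) (orow G f u)
  · by_cases h2 : InC (fhDiag l) (orow G f w)
    · refine ⟨u, w, Or.inr hu, Or.inr hw, h.1, ?_⟩
      have := h.2
      rw [row_outside f _ ou, row_outside f _ ow] at this ⊢
      rwa [← hkl _ _ h1 (hC u ou) h2 (hC w ow)] at this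
    · exact blocks_of_not_inC f l ow h2 hw
  · exact blocks_of_not_inC f l ou h1 hu

/-- If every diagonal is violated somewhere in `G`, then at most three vertices together with the
full house already violate every diagonal. -/
lemma exists_small_blocker [DecidableEq V] (f : fullHouse ↪g G)
    (h : ∀ k, ∃ u w, Bad G f (fhDiag k) u w) :
    ∃ T : Finset V, T.card ≤ 3 ∧ ∀ k, Blocks G f k T := by
  by_cases hC : ∀ u, u ∉ Set.range f → InC (fhDiag 1) (orow G f u)
  · have hC3 : ∀ u, u ∉ Set.range f → InC (fhDiag 3) (orow G f u) := fun u hu =>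
      (inC_three_iff _).2 ((inC_one_iff _).1 (hC u hu))
    -- It suffices to violate the two diagonals with index `1` and `3`.
    have key : ∀ T : Finset V, (∃ u ∈ T, ∃ w ∈ T, Bad G f (fhDiag 1) u w) →
        (∃ u ∈ T, ∃ w ∈ T, Bad G f (fhDiag 3) u w) → ∀ k, Blocks G f k T := by
      rintro T ⟨u, hu, w, hw, hb⟩ ⟨x, hx, y, hy, hb'⟩ k
      fin_cases k
      · exact hb.transfer f qf_zero_eq_one hC hu hw
      · exact ⟨u, w, Or.inr hu, Or.inr hw, hb⟩
      · exact hb'.transfer f qf_two_eq_three hC3 hx hy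
      · exact ⟨x, y, Or.inr hx, Or.inr hy, hb'⟩
    obtain ⟨v, w, hb⟩ := h 1
    obtain ⟨x, y, hb'⟩ := h 3
    obtain ⟨ov, ow⟩ := hb.outside f hC
    obtain ⟨ox, oy⟩ := hb'.outside f hC3
    -- The pair `p, q` violates exactly one of the two diagonals iff `ℓ = 1` on both rows.
    have hl : ∀ p q, p ∉ Set.range f → q ∉ Set.range f → p ≠ q →
        ((Bad G f (fhDiag 1) p q ↔ Bad G f (fhDiag 3) p q) ↔
          ((orow G f p 1 + orow G f p 3) * (orow G f q 1 + orow G f q 3) = 0)) := by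
      intro p q hp hq hpq
      rw [← qf_one_sub_three, sub_eq_zero]
      simp only [Bad, hpq, row_outside f _ hp, row_outside f _ hq, ne_eq, not_false_iff, true_and]
      generalize qf (fhDiag 1) _ _ = a, qf (fhDiag 3) _ _ = b, adjv G p q = c
      revert a b c
      decide +kernel
    by_cases h1 : Bad G f (fhDiag 3) v w
    · exact ⟨{v, w}, Finset.card_le_two.trans (by norm_num),
        key _ ⟨v, by simp, w, by simp, hb⟩ ⟨v, by simp, w, by simp, h1⟩⟩
    by_cases h2 : Bad G f (fhDiag 1) x y
    · exact ⟨{x, y}, Finset.card_le_two.trans (by norm_num),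
        key _ ⟨x, by simp, y, by simp, h2⟩ ⟨x, by simp, y, by simp, hb'⟩⟩
    by_cases hvx : v = x
    · subst hvx
      exact ⟨{v, w, y}, Finset.card_le_three,
        key _ ⟨v, by simp, w, by simp, hb⟩ ⟨v, by simp, y, by simp, hb'⟩⟩
    have e1 := mt (hl v w ov ow hb.1).2 fun e => h1 (e.1 hb)
    have e2 := mt (hl x y ox oy hb'.1).2 fun e => h2 (e.2 hb')
    have e3 := mt (hl v x ov ox hvx).1 (mul_ne_zero (left_ne_zero_of_mul e1)
      (left_ne_zero_of_mul e2))
    by_cases h3 : Bad G f (fhDiag 3) v x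
    · exact ⟨{v, w, x}, Finset.card_le_three,
        key _ ⟨v, by simp, w, by simp, hb⟩ ⟨v, by simp, x, by simp, h3⟩⟩
    · have h4 : Bad G f (fhDiag 1) v x := by
        by_contra h4
        exact e3 (iff_of_false h4 h3)
      exact ⟨{v, x, y}, Finset.card_le_three,
        key _ ⟨v, by simp, x, by simp, h4⟩ ⟨x, by simp, y, by simp, hb'⟩⟩
  · push Not at hC
    obtain ⟨u, hu, hc⟩ := hC
    have hc3 : ¬ InC (fhDiag 3) (orow G f u) := fun hh =>
      hc ((inC_one_iff _).2 ((inC_three_iff _).1 hh))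
    rcases not_inC_zero_or_two _ hc with h0 | h2
    · obtain ⟨x, y, hb⟩ := h 2
      refine ⟨{u, x, y}, Finset.card_le_three, fun k => ?_⟩
      fin_cases k
      · exact blocks_of_not_inC f _ hu h0 (by simp)
      · exact blocks_of_not_inC f _ hu hc (by simp)
      · exact ⟨x, y, by simp, by simp, hb⟩
      · exact blocks_of_not_inC f _ hu hc3 (by simp)
    · obtain ⟨x, y, hb⟩ := h 0
      refine ⟨{u, x, y}, Finset.card_le_three, fun k => ?_⟩
      fin_cases k
      · exact ⟨x, y, by simp, by simp, hb⟩
      · exact blocks_of_not_inC f _ hu hc (by simp)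
      · exact blocks_of_not_inC f _ hu h2 (by simp)
      · exact blocks_of_not_inC f _ hu hc3 (by simp)

end

/-- If `G ∈ F₄(F₂, full house)`, then `G` has at most 8 vertices. -/
theorem card_le_eight_of_forbRel_fullHouse {V : Type*} [Fintype V] [DecidableEq V]
    (G : SimpleGraph V) (h : MemForbRel (ZMod 2) 4 fullHouse G) :
    Fintype.card V ≤ 8 := by
  obtain ⟨hG, f, hf⟩ := h
  have hbad : ∀ k, ∃ u w, Bad G f (fhDiag k) u w := by
    intro k
    by_contra hc
    push Not at hc
    have := minRank_le_of_good f (fhDiag k) hc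
    omega
  obtain ⟨T, hT, hblock⟩ := exists_small_blocker f hbad
  by_contra hcard
  have hlt : (Finset.univ.image f ∪ T).card < Fintype.card V := by
    have h1 := Finset.card_union_le (Finset.univ.image f) T
    have h2 : (Finset.univ.image f).card ≤ 5 := Finset.card_image_le.trans (by simp)
    omega
  obtain ⟨v, hv⟩ : ∃ v, v ∉ Finset.univ.image f ∪ T := by
    by_contra hc
    push Not at hc
    rw [Finset.eq_univ_of_forall hc, Finset.card_univ] at hlt
    exact lt_irrefl _ hlt
  simp only [Finset.mem_union, Finset.mem_image, Finset.mem_univ, true_and, not_or] at hv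
  have hvr : v ∉ Set.range f := hv.1
  obtain ⟨k, hk⟩ := exists_diag_of_deleteVert f hvr (by have := hf v hvr; omega)
  obtain ⟨u, w, hu, hw, hb⟩ := hblock k
  refine hk u w ?_ ?_ hb
  · rintro rfl
    exact hu.elim hvr hv.2
  · rintro rfl
    exact hw.elim hvr hv.2
end
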